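/- Fix θ ∈ (0,1) and a measurable function m : (0,∞) → ℝ³, and define F(a) := ∫₀^∞ e^{-t} (2π q_t(θ,θ))^{-3/2} exp( -|m(t) - a|²/(2 q_t(θ,θ)) ) dt for a ∈ ℝ³. Then F(a) is finite for every a ∈ ℝ³, the map a ↦ F(a) is continuous, and there is a constant C < ∞, independent of θ, m and a, such that θ^{3/2} (1-θ)^{3/2} F(a) ≤ C for all θ ∈ (0,1), all measurable m and all a ∈ ℝ³. -/

import Mathlib

open MeasureTheory Real Filter

/-- Gauss–Weierstrass kernel: fundamental solution of `∂u/∂t = (1/2)∂²u/∂x²` on `ℝ`. -/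
noncomputable def heatK (t x : ℝ) : ℝ :=
  (Real.sqrt (2 * Real.pi * t))⁻¹ * Real.exp (-(x ^ 2) / (2 * t))

/-- Heat kernel on the half-line `(0,∞)` with Dirichlet boundary condition at `0`. -/
noncomputable def heatG (t a b : ℝ) : ℝ := heatK t (a - b) - heatK t (a + b)

/-- Method-of-images series for the Dirichlet heat kernel on `(0,1)`. -/
noncomputable def heatg (t θ θ' : ℝ) : ℝ :=
  ∑' n : ℤ, (heatK t (θ - θ' + 2 * (n : ℝ)) - heatK t (θ + θ' + 2 * (n : ℝ)))

/-- `q_t(θ,θ') = ∫₀ᵗ g_{2s}(θ,θ') ds`. -/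
noncomputable def qker (t θ θ' : ℝ) : ℝ := ∫ s in Set.Ioc (0 : ℝ) t, heatg (2 * s) θ θ'

/-- `q^t(θ,θ') = ∫ₜ^∞ g_{2s}(θ,θ') ds`. -/
noncomputable def qkerTop (t θ θ' : ℝ) : ℝ := ∫ s in Set.Ioi t, heatg (2 * s) θ θ'

/-- The 1-potential `U₃^{θ,a}` of the 3-dimensional random string, evaluated along a
curve `m` (the heat evolution of the initial datum at the point `θ`). -/
noncomputable def potU (θ : ℝ) (m : ℝ → EuclideanSpace ℝ (Fin 3))
    (a : EuclideanSpace ℝ (Fin 3)) : ℝ :=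
  ∫ t in Set.Ioi (0 : ℝ),
    Real.exp (-t) * (2 * Real.pi * qker t θ θ) ^ (-(3 : ℝ) / 2) *
      Real.exp (-‖m t - a‖ ^ 2 / (2 * qker t θ θ))

/-!
By Poisson summation the series of images is the spectral series of the Dirichlet heat kernel, and
integrating it gives `q_t(θ, θ) = ∑ₙ sin²(πnθ) (1 - exp(-(πn)² t)) / (πn)²`, summed over `ℤ`. Since
`1 - exp(-x) ≥ x / (1 + x)`, this dominates the resolvent `∑ₙ sin²(πnθ) / (1/t + (πn)²)`, whose
closed form is `sinh(aθ) sinh(a(1-θ)) / (a sinh a)` with `a = 1/√t`. The reciprocal of the latter is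
`a coth(aθ) + a coth(a(1-θ))`, so `coth x ≤ 1 + 1/x` yields `1 / q_t(θ, θ) ≤ 2/√t + 1/(θ(1-θ))`.
Multiplied by `(θ(1-θ))^(d/2)`, the integrand of the `d`-dimensional potential is therefore at most
`exp(-t) (1 + 1/√t)^(d/2)`, which does not involve `θ`, `m` or `a` and is integrable when `d < 4`.
-/

theorem hasSum_fourierCoeffOn_of_summable {T a b : ℝ} [Fact (0 < T)] (hab : a < b)
    (hperiod : a + T = b) {f : ℝ → ℂ} (hf : ContinuousOn f (Set.Icc a b)) (hends : f a = f b)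
    (hsum : Summable (fourierCoeffOn hab f)) {x : ℝ} (hx : x ∈ Set.Ico a b) :
    HasSum (fun n : ℤ => fourierCoeffOn hab f n * fourier n (x : AddCircle T)) (f x) := by
  subst hperiod
  let F : C(AddCircle T, ℂ) := ⟨AddCircle.liftIco T a f, AddCircle.liftIco_continuous hends hf⟩
  have hF : fourierCoeff F = fourierCoeffOn hab f := funext fun n => fourierCoeff_liftIco_eq f n
  have hpointwise := has_pointwise_sum_fourier_series_of_summable (f := F) (hF ▸ hsum) x
  rw [hF] at hpointwise
  simpa only [F, ContinuousMap.coe_mk, AddCircle.liftIco_coe_apply hx, smul_eq_mul]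
    using hpointwise

-- The primitive comes from solving `F' = fourier (-n) cosh` for the two coefficients of the ansatz
-- `F = fourier (-n) (A cosh + B sinh)`.
theorem hasDerivAt_fourier_neg_mul_cosh {a : ℝ} (ha : a ≠ 0) (n : ℤ) (x : ℝ) :
    HasDerivAt (fun y : ℝ => fourier (-n) (y : UnitAddCircle) *
        ((π * Complex.I * n * cosh (a * (1 - 2 * y)) - a * sinh (a * (1 - 2 * y))) /
          (2 * (a ^ 2 + (π * n) ^ 2))))
      (fourier (-n) (x : UnitAddCircle) * cosh (a * (1 - 2 * x))) x := by
  have hlin : HasDerivAt (fun y : ℝ => a * (1 - 2 * y)) (a * -(2 * 1)) x :=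
    (((hasDerivAt_id x).const_mul 2).const_sub 1).const_mul a
  have hden : (a : ℂ) ^ 2 + π ^ 2 * n ^ 2 ≠ 0 := by norm_cast; positivity
  convert! (hasDerivAt_fourier_neg 1 n x).mul
    (((hlin.cosh.ofReal_comp.const_mul (π * Complex.I * n : ℂ)).sub
      (hlin.sinh.ofReal_comp.const_mul (a : ℂ))).div_const _) using 1
  simp only [Pi.sub_apply]
  push_cast
  field_simp
  linear_combination (π * n : ℂ) ^ 2 * Complex.cosh (a * (1 - 2 * x)) * Complex.I_sq

theorem fourierCoeffOn_cosh {a : ℝ} (ha : a ≠ 0) (n : ℤ) :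
    fourierCoeffOn zero_lt_one (fun x : ℝ => (cosh (a * (1 - 2 * x)) : ℂ)) n =
      ((a * sinh a / (a ^ 2 + (π * n) ^ 2) : ℝ) : ℂ) := by
  have hcont : Continuous fun x : ℝ =>
      fourier (-n) (x : UnitAddCircle) * (cosh (a * (1 - 2 * x)) : ℂ) :=
    ((map_continuous _).comp (AddCircle.continuous_mk' 1)).mul (by fun_prop)
  rw [fourierCoeffOn_eq_integral, sub_zero, div_one, one_smul]
  refine (intervalIntegral.integral_eq_sub_of_hasDerivAt
    (fun x _ => hasDerivAt_fourier_neg_mul_cosh ha n x) (hcont.intervalIntegrable 0 1)).trans ?_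
  rw [show ((1 : ℝ) : UnitAddCircle) = ((0 : ℝ) : UnitAddCircle) from AddCircle.coe_period 1,
    AddCircle.coe_zero, fourier_eval_zero]
  simp only [mul_one, mul_zero, sub_zero, one_mul, show (1 : ℝ) - 2 = -1 by norm_num, mul_neg,
    cosh_neg, sinh_neg]
  push_cast
  field_simp
  ring

theorem summable_one_div_sq_add_sq (a : ℝ) :
    Summable fun n : ℤ => 1 / (a ^ 2 + (π * n) ^ 2) := by
  have hsq : Summable fun n : ℤ => 1 / (n : ℝ) ^ 2 := Real.summable_one_div_int_pow.mpr one_lt_two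
  refine hsq.of_norm_bounded_eventually ?_
  filter_upwards [(Set.finite_singleton (0 : ℤ)).compl_mem_cofinite] with n hn
  have hn : (n : ℝ) ≠ 0 := Int.cast_ne_zero.mpr hn
  rw [norm_of_nonneg (by positivity)]
  gcongr
  calc (n : ℝ) ^ 2 ≤ π ^ 2 * n ^ 2 :=
        le_mul_of_one_le_left (sq_nonneg _) (one_le_pow₀ (by linarith [pi_gt_three]))
    _ ≤ a ^ 2 + (π * n) ^ 2 := by rw [mul_pow]; exact le_add_of_nonneg_left (sq_nonneg a)

theorem hasSum_cos_div_sq_add_sq {a x : ℝ} (ha : a ≠ 0) (hx : x ∈ Set.Ico 0 1) :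
    HasSum (fun n : ℤ => cos (2 * π * n * x) / (a ^ 2 + (π * n) ^ 2))
      (cosh (a * (1 - 2 * x)) / (a * sinh a)) := by
  have hsinh : sinh a ≠ 0 := sinh_ne_zero.mpr ha
  have hsum : Summable (fourierCoeffOn zero_lt_one fun x : ℝ => (cosh (a * (1 - 2 * x)) : ℂ)) := by
    rw [funext (fourierCoeffOn_cosh ha), Complex.summable_ofReal]
    simpa only [mul_one_div] using (summable_one_div_sq_add_sq a).mul_left (a * sinh a)
  have hfourier := hasSum_fourierCoeffOn_of_summable zero_lt_one (zero_add 1)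
    (f := fun x : ℝ => (cosh (a * (1 - 2 * x)) : ℂ)) (by fun_prop) (by norm_num) hsum hx
  refine HasSum.congr_fun ((Complex.hasSum_re hfourier).div_const (a * sinh a)) fun n => ?_
  rw [fourierCoeffOn_cosh ha, Complex.re_ofReal_mul, fourier_coe_apply,
    show 2 * π * Complex.I * n * x / (1 : ℝ) = ((2 * π * n * x : ℝ) : ℂ) * Complex.I by
      push_cast; ring, Complex.exp_ofReal_mul_I_re]
  field_simp

theorem hasSum_sin_sq_div_sq_add_sq {a x : ℝ} (ha : a ≠ 0) (hx : x ∈ Set.Ico 0 1) :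
    HasSum (fun n : ℤ => sin (π * n * x) ^ 2 / (a ^ 2 + (π * n) ^ 2))
      (sinh (a * x) * sinh (a * (1 - x)) / (a * sinh a)) := by
  have hcosh : cosh (a * (1 - 2 * 0)) - cosh (a * (1 - 2 * x)) =
      2 * (sinh (a * x) * sinh (a * (1 - x))) := by
    rw [show a * (1 - 2 * 0) = a * (1 - x) + a * x by ring,
      show a * (1 - 2 * x) = a * (1 - x) - a * x by ring, cosh_add, cosh_sub]
    ring
  have h := ((hasSum_cos_div_sq_add_sq ha (Set.left_mem_Ico.mpr one_pos)).sub
    (hasSum_cos_div_sq_add_sq ha hx)).div_const 2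
  rw [← sub_div, hcosh, mul_div_assoc, mul_div_cancel_left₀ _ two_ne_zero] at h
  refine h.congr_fun fun n => ?_
  rw [sin_sq_eq_half_sub, mul_zero, cos_zero]
  ring_nf

theorem hasSum_cosKernel_real {t : ℝ} (ht : 0 < t) (x : ℝ) :
    HasSum (fun n : ℤ => cos (2 * π * x * n) * rexp (-π * n ^ 2 * t))
      (HurwitzZeta.cosKernel x t) := by
  have h := Complex.hasSum_re (HurwitzZeta.hasSum_int_cosKernel x ht)
  rw [Complex.ofReal_re] at h
  refine h.congr_fun fun n => ?_
  rw [Complex.re_mul_ofReal, ← Complex.exp_ofReal_mul_I_re]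
  push_cast
  ring_nf

theorem hasSum_heatK_add_two_mul {t : ℝ} (ht : 0 < t) (x : ℝ) :
    HasSum (fun n : ℤ => heatK t (x + 2 * n))
      (1 / 2 * HurwitzZeta.cosKernel (x / 2 : ℝ) (π * t / 2)) := by
  have hτ : 0 < π * t / 2 := by positivity
  have hroot : √(2 * π * t) = 2 * √(π * t / 2) := by
    rw [show 2 * π * t = 2 ^ 2 * (π * t / 2) by ring, sqrt_mul' _ hτ.le, sqrt_sq two_pos.le]
  have h := (HurwitzZeta.hasSum_int_evenKernel (x / 2) (one_div_pos.mpr hτ)).mul_left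
    (√(2 * π * t))⁻¹
  have hscale : (√(2 * π * t))⁻¹ * (1 / (1 / (π * t / 2)) ^ (1 / 2 : ℝ)) = 1 / 2 := by
    rw [← sqrt_eq_rpow, one_div (π * t / 2), sqrt_inv, one_div, inv_inv, hroot]
    field_simp
  rw [HurwitzZeta.evenKernel_functional_equation, one_div_one_div, ← mul_assoc, hscale] at h
  refine h.congr_fun fun n => ?_
  rw [heatK]
  congr 2
  field_simp
  ring

theorem hasSum_heatg {t : ℝ} (ht : 0 < t) (θ θ' : ℝ) :
    HasSum (fun n : ℤ => sin (π * n * θ) * sin (π * n * θ') * rexp (-((π * n) ^ 2 * (t / 2))))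
      (heatg t θ θ') := by
  have hτ : 0 < π * t / 2 := by positivity
  have himages : heatg t θ θ' =
      1 / 2 * HurwitzZeta.cosKernel ((θ - θ') / 2 : ℝ) (π * t / 2) -
        1 / 2 * HurwitzZeta.cosKernel ((θ + θ') / 2 : ℝ) (π * t / 2) :=
    ((hasSum_heatK_add_two_mul ht (θ - θ')).sub (hasSum_heatK_add_two_mul ht (θ + θ'))).tsum_eq
  rw [himages]
  refine HasSum.congr_fun (((hasSum_cosKernel_real hτ _).mul_left (1 / 2)).sub
    ((hasSum_cosKernel_real hτ _).mul_left (1 / 2))) fun n => ?_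
  rw [show 2 * π * ((θ - θ') / 2) * n = π * n * θ - π * n * θ' by ring,
    show 2 * π * ((θ + θ') / 2) * n = π * n * θ + π * n * θ' by ring, cos_sub, cos_add]
  ring_nf

theorem setIntegral_Ioc_exp_neg_mul {r : ℝ} (hr : r ≠ 0) {t : ℝ} (ht : 0 ≤ t) :
    ∫ s in Set.Ioc 0 t, rexp (-(r * s)) = (1 - rexp (-(r * t))) / r := by
  simp_rw [← neg_mul, ← intervalIntegral.integral_of_le ht]
  rw [intervalIntegral.integral_comp_mul_left _ (neg_ne_zero.mpr hr), integral_exp, mul_zero,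
    exp_zero, smul_eq_mul, inv_neg, neg_mul, ← mul_neg, neg_sub, inv_mul_eq_div]

theorem setIntegral_Ioc_sin_mul_sin_mul_exp {t : ℝ} (ht : 0 ≤ t) (θ θ' : ℝ) (n : ℤ) :
    ∫ s in Set.Ioc 0 t, sin (π * n * θ) * sin (π * n * θ') * rexp (-((π * n) ^ 2 * s)) =
      sin (π * n * θ) * sin (π * n * θ') * ((1 - rexp (-((π * n) ^ 2 * t))) / (π * n) ^ 2) := by
  rcases eq_or_ne n 0 with rfl | hn
  · simp
  · rw [integral_const_mul, setIntegral_Ioc_exp_neg_mul (by positivity) ht]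

theorem setIntegral_Ioc_norm_sin_mul_sin_mul_exp_le {t : ℝ} (ht : 0 ≤ t) (θ θ' : ℝ) (n : ℤ) :
    ∫ s in Set.Ioc 0 t, ‖sin (π * n * θ) * sin (π * n * θ') * rexp (-((π * n) ^ 2 * s))‖ ≤
      1 / (π * n) ^ 2 := by
  rcases eq_or_ne n 0 with rfl | hn
  · simp
  have hsin : |sin (π * n * θ) * sin (π * n * θ')| ≤ 1 := by
    rw [abs_mul]
    exact mul_le_one₀ (abs_sin_le_one _) (abs_nonneg _) (abs_sin_le_one _)
  have hexp : rexp (-((π * n) ^ 2 * t)) ≤ 1 := exp_le_one_iff.mpr (neg_nonpos.mpr (by positivity))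
  simp_rw [norm_mul _ (rexp _), norm_eq_abs, abs_exp]
  rw [integral_const_mul, setIntegral_Ioc_exp_neg_mul (by positivity) ht]
  calc |sin (π * n * θ) * sin (π * n * θ')| * ((1 - rexp (-((π * n) ^ 2 * t))) / (π * n) ^ 2)
    _ ≤ (1 - rexp (-((π * n) ^ 2 * t))) / (π * n) ^ 2 :=
        mul_le_of_le_one_left (div_nonneg (sub_nonneg.mpr hexp) (sq_nonneg _)) hsin
    _ ≤ 1 / (π * n) ^ 2 := by
        gcongr
        exact sub_le_self 1 (exp_pos _).le

-- The term `n = 0` divides by zero; it is `0`, as it should be, because `sin 0 = 0`.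
theorem hasSum_qker {t : ℝ} (ht : 0 ≤ t) (θ θ' : ℝ) :
    HasSum (fun n : ℤ => sin (π * n * θ) * sin (π * n * θ') *
      ((1 - rexp (-((π * n) ^ 2 * t))) / (π * n) ^ 2)) (qker t θ θ') := by
  have hint (c : ℝ) (n : ℤ) :
      IntegrableOn (fun s => c * rexp (-((π * n) ^ 2 * s))) (Set.Ioc 0 t) :=
    (by fun_prop : Continuous _).integrableOn_Ioc
  have hsum : Summable fun n : ℤ => ∫ s in Set.Ioc 0 t,
      ‖sin (π * n * θ) * sin (π * n * θ') * rexp (-((π * n) ^ 2 * s))‖ :=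
    Summable.of_nonneg_of_le (fun n => integral_nonneg fun s => norm_nonneg _)
      (setIntegral_Ioc_norm_sin_mul_sin_mul_exp_le ht θ θ')
      (by simpa using summable_one_div_sq_add_sq 0)
  have hqker : qker t θ θ' = ∫ s in Set.Ioc 0 t,
      ∑' n : ℤ, sin (π * n * θ) * sin (π * n * θ') * rexp (-((π * n) ^ 2 * s)) :=
    setIntegral_congr_fun measurableSet_Ioc fun s hs => by
      simpa using (hasSum_heatg (mul_pos two_pos hs.1) θ θ').tsum_eq.symm
  rw [hqker]
  exact (hasSum_integral_of_summable_integral_norm (fun n : ℤ => hint _ n) hsum).congr_fun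
    fun n => (setIntegral_Ioc_sin_mul_sin_mul_exp ht θ θ' n).symm

theorem monotoneOn_qker_self (θ : ℝ) : MonotoneOn (fun t => qker t θ θ) (Set.Ici 0) := by
  intro s hs t ht hst
  refine hasSum_le (fun n => ?_) (hasSum_qker hs θ θ) (hasSum_qker ht θ θ)
  gcongr
  exact mul_self_nonneg _

theorem inv_inv_add_le_one_sub_exp_div {r t : ℝ} (hr : 0 < r) (ht : 0 < t) :
    (t⁻¹ + r)⁻¹ ≤ (1 - rexp (-(r * t))) / r := by
  have hexp : rexp (-(r * t)) ≤ (r * t + 1)⁻¹ := by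
    rw [exp_neg]
    exact inv_anti₀ (by positivity) (add_one_le_exp _)
  calc (t⁻¹ + r)⁻¹ = (1 - (r * t + 1)⁻¹) / r := by field_simp; ring
    _ ≤ (1 - rexp (-(r * t))) / r := by gcongr

theorem sinh_mul_sinh_div_le_qker_self {θ : ℝ} (hθ : θ ∈ Set.Ico 0 1) {a : ℝ} (ha : 0 < a) :
    sinh (a * θ) * sinh (a * (1 - θ)) / (a * sinh a) ≤ qker (a ^ 2)⁻¹ θ θ := by
  refine hasSum_le (fun n => ?_) (hasSum_sin_sq_div_sq_add_sq ha.ne' hθ)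
    (hasSum_qker (by positivity) θ θ)
  rcases eq_or_ne n 0 with rfl | hn
  · simp
  · rw [← pow_two, div_eq_mul_inv]
    gcongr
    simpa only [inv_inv] using inv_inv_add_le_one_sub_exp_div (r := (π * n) ^ 2)
      (by positivity) (inv_pos.mpr (pow_pos ha 2))

-- `coth x ≤ 1 + 1 / x`, with denominators cleared.
theorem mul_cosh_le_one_add_mul_sinh {x : ℝ} (hx : 0 ≤ x) : x * cosh x ≤ (1 + x) * sinh x := by
  have hexp : x * rexp (-x) ≤ sinh x :=
    (mul_le_of_le_one_right hx (exp_le_one_iff.mpr (neg_nonpos.mpr hx))).trans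
      (self_le_sinh_iff.mpr hx)
  linear_combination hexp + x * cosh_sub_sinh x

-- `sinh (x + y) / (sinh x * sinh y) = coth x + coth y`, to which `coth x ≤ 1 + 1 / x` applies.
theorem mul_mul_sinh_add_le {x y : ℝ} (hx : 0 ≤ x) (hy : 0 ≤ y) :
    x * y * sinh (x + y) ≤ (x + y + 2 * (x * y)) * (sinh x * sinh y) := by
  have hx' := mul_le_mul_of_nonneg_left (mul_cosh_le_one_add_mul_sinh hx)
    (mul_nonneg hy (sinh_nonneg_iff.mpr hy))
  have hy' := mul_le_mul_of_nonneg_left (mul_cosh_le_one_add_mul_sinh hy)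
    (mul_nonneg hx (sinh_nonneg_iff.mpr hx))
  rw [sinh_add]
  linear_combination hx' + hy'

theorem mul_one_sub_div_le_qker_self {θ : ℝ} (hθ : θ ∈ Set.Ico 0 1) {t : ℝ} (ht : 0 < t) :
    θ * (1 - θ) / (1 + 2 * (θ * (1 - θ)) / √t) ≤ qker t θ θ := by
  obtain ⟨a, ha, rfl⟩ : ∃ a : ℝ, 0 < a ∧ t = (a ^ 2)⁻¹ :=
    ⟨(√t)⁻¹, by positivity, by rw [inv_pow, inv_inv, sq_sqrt ht.le]⟩
  have hθ' : 0 ≤ 1 - θ := sub_nonneg.mpr hθ.2.le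
  have hprod := mul_mul_sinh_add_le (mul_nonneg ha.le hθ.1) (mul_nonneg ha.le hθ')
  rw [show a * θ + a * (1 - θ) = a by ring] at hprod
  refine le_trans ?_ (sinh_mul_sinh_div_le_qker_self hθ ha)
  have hw : 0 ≤ θ * (1 - θ) := mul_nonneg hθ.1 hθ'
  rw [sqrt_inv, sqrt_sq ha.le, div_inv_eq_mul,
    div_le_div_iff₀ (by positivity) (by positivity)]
  refine le_of_mul_le_mul_left ?_ ha
  linear_combination hprod

theorem qker_self_pos {θ : ℝ} (hθ : θ ∈ Set.Ioo 0 1) {t : ℝ} (ht : 0 < t) :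
    0 < qker t θ θ := by
  have hw : 0 < θ * (1 - θ) := mul_pos hθ.1 (sub_pos.mpr hθ.2)
  exact lt_of_lt_of_le (by positivity)
    (mul_one_sub_div_le_qker_self (Set.Ioo_subset_Ico_self hθ) ht)

theorem mul_one_sub_le_mul_qker_self {θ : ℝ} (hθ : θ ∈ Set.Ico 0 1) {t : ℝ} (ht : 0 < t) :
    θ * (1 - θ) ≤ (1 + 1 / √t) * (2 * π * qker t θ θ) := by
  have hw : 0 ≤ θ * (1 - θ) := mul_nonneg hθ.1 (sub_nonneg.mpr hθ.2.le)
  have hw' : 2 * (θ * (1 - θ)) ≤ 1 := by linarith [sq_nonneg (1 - 2 * θ)]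
  have hq := mul_one_sub_div_le_qker_self hθ ht
  have hq₀ : 0 ≤ qker t θ θ := le_trans (by positivity) hq
  calc θ * (1 - θ) ≤ (1 + 2 * (θ * (1 - θ)) / √t) * qker t θ θ :=
        (div_le_iff₀' (by positivity)).mp hq
    _ ≤ (1 + 1 / √t) * (2 * π * qker t θ θ) := by
        gcongr
        exact le_mul_of_one_le_left hq₀ (by linarith [pi_gt_three])

theorem rpow_mul_qker_self_rpow_le {θ : ℝ} (hθ : θ ∈ Set.Ioo 0 1) {t : ℝ} (ht : 0 < t) {p : ℝ}
    (hp : 0 ≤ p) :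
    (θ * (1 - θ)) ^ p * (2 * π * qker t θ θ) ^ (-p) ≤ (1 + 1 / √t) ^ p := by
  have hq : 0 < 2 * π * qker t θ θ := mul_pos two_pi_pos (qker_self_pos hθ ht)
  have hw : 0 ≤ θ * (1 - θ) := mul_nonneg hθ.1.le (sub_nonneg.mpr hθ.2.le)
  rw [rpow_neg hq.le, ← div_eq_mul_inv, ← div_rpow hw hq.le]
  exact rpow_le_rpow (div_nonneg hw hq.le)
    ((div_le_iff₀ hq).mpr (mul_one_sub_le_mul_qker_self (Set.Ioo_subset_Ico_self hθ) ht)) hp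

theorem one_add_rpow_le {u p : ℝ} (hu : 0 ≤ u) (hp : 0 ≤ p) :
    (1 + u) ^ p ≤ 2 ^ p * (1 + u ^ p) := by
  have hmax : max 1 u ^ p ≤ 1 + u ^ p := by
    rcases max_cases 1 u with ⟨h, -⟩ | ⟨h, -⟩ <;> rw [h]
    · rw [one_rpow]
      exact le_add_of_nonneg_right (rpow_nonneg hu p)
    · exact le_add_of_nonneg_left zero_le_one
  calc (1 + u) ^ p ≤ (2 * max 1 u) ^ p := by
        gcongr
        linarith [le_max_left 1 u, le_max_right 1 u]
    _ = 2 ^ p * max 1 u ^ p := mul_rpow two_pos.le (by positivity)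
    _ ≤ 2 ^ p * (1 + u ^ p) := by gcongr

theorem integrableOn_exp_neg_mul_one_add_inv_sqrt_rpow {p : ℝ} (hp₀ : 0 ≤ p) (hp : p < 2) :
    IntegrableOn (fun t : ℝ => rexp (-t) * (1 + 1 / √t) ^ p) (Set.Ioi 0) := by
  have hgamma := GammaIntegral_convergent (s := 1 - p / 2) (by linarith)
  have hdom : IntegrableOn (fun t : ℝ => 2 ^ p * (rexp (-t) + rexp (-t) * t ^ (1 - p / 2 - 1)))
      (Set.Ioi 0) := ((integrableOn_exp_neg_Ioi 0).add hgamma).const_mul _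
  refine hdom.mono' (by fun_prop) ?_
  filter_upwards [ae_restrict_mem measurableSet_Ioi] with t (ht : 0 < t)
  have hroot : (1 / √t) ^ p = t ^ (1 - p / 2 - 1) := by
    rw [one_div, sqrt_eq_rpow, ← rpow_neg ht.le, ← rpow_mul ht.le]
    ring_nf
  rw [norm_of_nonneg (by positivity), ← hroot]
  calc rexp (-t) * (1 + 1 / √t) ^ p ≤ rexp (-t) * (2 ^ p * (1 + (1 / √t) ^ p)) := by
        gcongr
        exact one_add_rpow_le (by positivity) hp₀
    _ = 2 ^ p * (rexp (-t) + rexp (-t) * (1 / √t) ^ p) := by ring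

section Potential

variable {E : Type*} [SeminormedAddCommGroup E] {d θ : ℝ} {m : ℝ → E}

/-- The integrand of the `1`-potential of the `d`-dimensional random string at the point `θ`;
`potU` is its integral for `d = 3`. The dimension `d` enters only as an exponent, so it is allowed
to be any real number, and the string takes values in any seminormed group. -/
noncomputable def potIntegrand (d θ : ℝ) (m : ℝ → E) (a : E) (t : ℝ) : ℝ :=
  rexp (-t) * (2 * π * qker t θ θ) ^ (-d / 2) * rexp (-‖m t - a‖ ^ 2 / (2 * qker t θ θ))

theorem potIntegrand_nonneg (hθ : θ ∈ Set.Ioo 0 1) (a : E) {t : ℝ} (ht : 0 < t) :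
    0 ≤ potIntegrand d θ m a t := by
  have hq := qker_self_pos hθ ht
  unfold potIntegrand
  positivity

theorem continuous_potIntegrand (d θ : ℝ) (m : ℝ → E) (t : ℝ) :
    Continuous fun a => potIntegrand d θ m a t := by
  unfold potIntegrand
  fun_prop

theorem aestronglyMeasurable_potIntegrand [MeasurableSpace E] [OpensMeasurableSpace E]
    (hm : AEMeasurable m (volume.restrict (Set.Ioi 0))) (a : E) :
    AEStronglyMeasurable (potIntegrand d θ m a) (volume.restrict (Set.Ioi 0)) := by
  have hq : AEMeasurable (fun t => qker t θ θ) (volume.restrict (Set.Ioi 0)) :=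
    aemeasurable_restrict_of_monotoneOn measurableSet_Ioi
      ((monotoneOn_qker_self θ).mono Set.Ioi_subset_Ici_self)
  have hdist : AEMeasurable (fun t => ‖m t - a‖) (volume.restrict (Set.Ioi 0)) :=
    (by fun_prop : Continuous fun x : E => ‖x - a‖).measurable.comp_aemeasurable hm
  unfold potIntegrand
  fun_prop

theorem rpow_mul_potIntegrand_le (hd : 0 ≤ d) (hθ : θ ∈ Set.Ioo 0 1) (a : E) {t : ℝ}
    (ht : 0 < t) :
    (θ * (1 - θ)) ^ (d / 2) * potIntegrand d θ m a t ≤ rexp (-t) * (1 + 1 / √t) ^ (d / 2) := by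
  have hq := qker_self_pos hθ ht
  have hw : 0 < θ * (1 - θ) := mul_pos hθ.1 (sub_pos.mpr hθ.2)
  have hgauss : rexp (-‖m t - a‖ ^ 2 / (2 * qker t θ θ)) ≤ 1 :=
    exp_le_one_iff.mpr
      (div_nonpos_of_nonpos_of_nonneg (neg_nonpos.mpr (sq_nonneg _)) (by positivity))
  calc (θ * (1 - θ)) ^ (d / 2) * potIntegrand d θ m a t
    _ ≤ (θ * (1 - θ)) ^ (d / 2) * (rexp (-t) * (2 * π * qker t θ θ) ^ (-d / 2)) := by
        gcongr
        exact mul_le_of_le_one_right (by positivity) hgauss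
    _ = rexp (-t) * ((θ * (1 - θ)) ^ (d / 2) * (2 * π * qker t θ θ) ^ (-(d / 2))) := by
        rw [neg_div, mul_left_comm]
    _ ≤ rexp (-t) * (1 + 1 / √t) ^ (d / 2) := by
        gcongr
        exact rpow_mul_qker_self_rpow_le hθ ht (by positivity)

theorem norm_potIntegrand_le (hd : 0 ≤ d) (hθ : θ ∈ Set.Ioo 0 1) (a : E) {t : ℝ} (ht : 0 < t) :
    ‖potIntegrand d θ m a t‖ ≤
      ((θ * (1 - θ)) ^ (d / 2))⁻¹ * (rexp (-t) * (1 + 1 / √t) ^ (d / 2)) := by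
  have hw : 0 < θ * (1 - θ) := mul_pos hθ.1 (sub_pos.mpr hθ.2)
  rw [norm_of_nonneg (potIntegrand_nonneg hθ a ht), le_inv_mul_iff₀ (by positivity)]
  exact rpow_mul_potIntegrand_le hd hθ a ht

variable [MeasurableSpace E] [OpensMeasurableSpace E]

theorem integrableOn_potIntegrand (hd₀ : 0 ≤ d) (hd : d < 4) (hθ : θ ∈ Set.Ioo 0 1)
    (hm : AEMeasurable m (volume.restrict (Set.Ioi 0))) (a : E) :
    IntegrableOn (potIntegrand d θ m a) (Set.Ioi 0) :=
  ((integrableOn_exp_neg_mul_one_add_inv_sqrt_rpow (p := d / 2) (by linarith)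
    (by linarith)).const_mul _).mono' (aestronglyMeasurable_potIntegrand hm a)
    ((ae_restrict_mem measurableSet_Ioi).mono fun _ ht => norm_potIntegrand_le hd₀ hθ a ht)

theorem continuous_integral_potIntegrand (hd₀ : 0 ≤ d) (hd : d < 4) (hθ : θ ∈ Set.Ioo 0 1)
    (hm : AEMeasurable m (volume.restrict (Set.Ioi 0))) :
    Continuous fun a => ∫ t in Set.Ioi 0, potIntegrand d θ m a t :=
  continuous_of_dominated (aestronglyMeasurable_potIntegrand hm)
    (fun a => (ae_restrict_mem measurableSet_Ioi).mono fun _ ht => norm_potIntegrand_le hd₀ hθ a ht)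
    ((integrableOn_exp_neg_mul_one_add_inv_sqrt_rpow (p := d / 2) (by linarith)
      (by linarith)).const_mul _)
    (ae_of_all _ fun t => continuous_potIntegrand d θ m t)

theorem rpow_mul_integral_potIntegrand_le (hd₀ : 0 ≤ d) (hd : d < 4) (hθ : θ ∈ Set.Ioo 0 1)
    (hm : AEMeasurable m (volume.restrict (Set.Ioi 0))) (a : E) :
    θ ^ (d / 2) * (1 - θ) ^ (d / 2) * ∫ t in Set.Ioi 0, potIntegrand d θ m a t ≤
      ∫ t in Set.Ioi 0, rexp (-t) * (1 + 1 / √t) ^ (d / 2) := by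
  rw [← mul_rpow hθ.1.le (sub_nonneg.mpr hθ.2.le), ← integral_const_mul]
  exact setIntegral_mono_on ((integrableOn_potIntegrand hd₀ hd hθ hm a).const_mul _)
    (integrableOn_exp_neg_mul_one_add_inv_sqrt_rpow (by linarith) (by linarith))
    measurableSet_Ioi fun t ht => rpow_mul_potIntegrand_le hd₀ hθ a ht

end Potential

theorem stmt13_general {E : Type*} [SeminormedAddCommGroup E] [MeasurableSpace E]
    [OpensMeasurableSpace E] {d : ℝ} (hd₀ : 0 ≤ d) (hd : d < 4) :
    ∃ C : ℝ, ∀ θ ∈ Set.Ioo (0 : ℝ) 1, ∀ m : ℝ → E,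
      AEMeasurable m (volume.restrict (Set.Ioi 0)) →
        (∀ a : E, IntegrableOn (potIntegrand d θ m a) (Set.Ioi 0)) ∧
        Continuous (fun a : E => ∫ t in Set.Ioi 0, potIntegrand d θ m a t) ∧
        ∀ a : E, θ ^ (d / 2) * (1 - θ) ^ (d / 2) * ∫ t in Set.Ioi 0, potIntegrand d θ m a t ≤ C :=
  ⟨∫ t in Set.Ioi 0, rexp (-t) * (1 + 1 / √t) ^ (d / 2), fun _ hθ _ hm =>
    ⟨integrableOn_potIntegrand hd₀ hd hθ hm, continuous_integral_potIntegrand hd₀ hd hθ hm,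
      rpow_mul_integral_potIntegrand_le hd₀ hd hθ hm⟩⟩

theorem stmt13 :
    ∃ C : ℝ, ∀ θ ∈ Set.Ioo (0 : ℝ) 1, ∀ m : ℝ → EuclideanSpace ℝ (Fin 3), Measurable m →
      (∀ a : EuclideanSpace ℝ (Fin 3),
        MeasureTheory.IntegrableOn
          (fun t => Real.exp (-t) * (2 * Real.pi * qker t θ θ) ^ (-(3 : ℝ) / 2) *
            Real.exp (-‖m t - a‖ ^ 2 / (2 * qker t θ θ)))
          (Set.Ioi (0 : ℝ))) ∧
      Continuous (potU θ m) ∧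
      ∀ a : EuclideanSpace ℝ (Fin 3),
        θ ^ ((3 : ℝ) / 2) * (1 - θ) ^ ((3 : ℝ) / 2) * potU θ m a ≤ C := by
  obtain ⟨C, hC⟩ := stmt13_general (E := EuclideanSpace ℝ (Fin 3)) (d := 3) zero_le_three
    (by norm_num)
  exact ⟨C, fun θ hθ m hm => hC θ hθ m hm.aemeasurable⟩
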